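/- Let (A_α) be a family of nonnegative reals indexed by multi-indices α with |α| ≥ 1, defined by prescribing positive values A_{ε_i} for the unit multi-indices ε_i and by the recursion A_α = ∑_{0 < β < α} A_β · A_{α−β} for |α| > 1 (sum over multi-indices β with 0 < |β| and β < α componentwise, β ≠ α). Then for every α with |α| ≥ 1, A_α = C_{|α|−1} · (|α|!/α!) · ∏_i A_{ε_i}^{α_i}, where C_n is the n-th Catalan number. -/

import Mathlib

open Finsupp

/-- Product expansion over the multi-indices below `α`. -/
theorem Finsupp.sum_Icc_prod {ι R : Type*} [DecidableEq ι] [CommSemiring R] (α : ι →₀ ℕ)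
    (f : ι → ℕ → R) :
    ∑ β ∈ Finset.Icc 0 α, ∏ i ∈ α.support, f i (β i) =
      ∏ i ∈ α.support, ∑ b ∈ Finset.range (α i + 1), f i b := by
  have h : Finset.Icc (0 : ι →₀ ℕ) α =
      α.support.finsupp fun i => Finset.range (α i + 1) := by
    ext β
    simp only [Finset.mem_Icc, zero_le, true_and, Finset.mem_finsupp_iff, Finset.mem_range,
      Nat.lt_succ_iff]
    refine ⟨fun h => ⟨Finsupp.support_mono h, fun i _ => h i⟩, fun h i => ?_⟩
    by_cases hi : i ∈ α.support
    · exact h.2 i hi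
    · have : β i = 0 := Finsupp.notMem_support_iff.1 fun hb => hi (h.1 hb)
      omega
  rw [h, Finset.finsupp, Finset.sum_map, Finset.prod_sum]
  refine Finset.sum_congr (by congr!) fun p _ => ?_
  rw [← Finset.prod_attach]
  refine Finset.prod_congr rfl fun i _ => ?_
  simp [Finsupp.indicator_of_mem i.2]

theorem Finsupp.sum_eq_sum_support {ι : Type*} {α β : ι →₀ ℕ} (h : β ≤ α) :
    (β.sum fun _ n => n) = ∑ i ∈ α.support, β i :=
  Finsupp.sum_of_support_subset _ (Finsupp.support_mono h) _ fun _ _ => rfl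

/-- Vandermonde's identity for multi-indices. -/
theorem Finsupp.sum_prod_choose {ι : Type*} [DecidableEq ι] (α : ι →₀ ℕ) (k : ℕ) :
    ∑ β ∈ Finset.Icc 0 α with (β.sum fun _ n => n) = k,
      ∏ i ∈ α.support, (α i).choose (β i) = (α.sum fun _ n => n).choose k := by
  have h := Finsupp.sum_Icc_prod α fun i b =>
    (Polynomial.X : Polynomial ℕ) ^ b * ((α i).choose b : Polynomial ℕ)
  have h2 : ∀ i, ∑ b ∈ Finset.range (α i + 1),
      (Polynomial.X : Polynomial ℕ) ^ b * ((α i).choose b : Polynomial ℕ) =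
        (Polynomial.X + 1) ^ α i := fun i => by simp [add_pow]
  simp only [h2, Finset.prod_pow_eq_pow_sum] at h
  have h3 := congrArg (fun p => Polynomial.coeff p k) h
  simp only [Polynomial.finsetSum_coeff, Polynomial.coeff_X_add_one_pow] at h3
  rw [Finsupp.sum, ← Nat.cast_id (Nat.choose _ k), ← h3, Finset.sum_filter]
  refine Finset.sum_congr rfl fun β hβ => ?_
  rw [Finset.prod_mul_distrib, Finset.prod_pow_eq_pow_sum,
    ← Finsupp.sum_eq_sum_support (Finset.mem_Icc.1 hβ).2, ← Nat.cast_prod, mul_comm,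
    Polynomial.coeff_natCast_mul, Polynomial.coeff_X_pow]
  simp [eq_comm]

theorem sum_Ioo_catalan_mul_catalan {n : ℕ} (hn : 1 < n) :
    ∑ k ∈ Finset.Ioo 0 n, catalan (k - 1) * catalan (n - k - 1) = catalan (n - 1) := by
  obtain ⟨m, rfl⟩ := Nat.exists_eq_add_of_lt hn
  have e : 1 + m + 1 - 1 = m + 1 := by omega
  rw [e, catalan_succ', Finset.Nat.sum_antidiagonal_eq_sum_range_succ_mk]
  refine Finset.sum_bij (fun k _ => k - 1) ?_ ?_ ?_ ?_
  · simp only [Finset.mem_Ioo, Finset.mem_range]; omega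
  · simp only [Finset.mem_Ioo]; omega
  · simp only [Finset.mem_Ioo, Finset.mem_range]
    exact fun b hb => ⟨b + 1, by omega, by omega⟩
  · simp only [Finset.mem_Ioo]
    intro k hk
    rw [show 1 + m + 1 - k - 1 = m - (k - 1) by omega]

/-- Closed form for the multi-index Catalan recursion:
    A_α = C_{|α|-1} (|α|!/α!) ∏_i A_{ε_i}^{α_i}. -/
theorem stmt5 (A : (ℕ →₀ ℕ) → ℝ)
    (hpos : ∀ i, 0 < A (Finsupp.single i 1))
    (hrec : ∀ α : ℕ →₀ ℕ, 1 < (α.sum fun _ n => n) →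
      A α = ∑ β ∈ Finset.Ioo (0 : ℕ →₀ ℕ) α, A β * A (α - β)) :
    ∀ α : ℕ →₀ ℕ, α ≠ 0 →
      A α = (catalan ((α.sum fun _ n => n) - 1) : ℝ) *
        (((α.sum fun _ n => n).factorial : ℝ) /
          (α.prod fun _ n => (n.factorial : ℝ))) *
        ∏ i ∈ α.support, A (Finsupp.single i 1) ^ α i := by
  intro α
  induction hn : (α.sum fun _ n => n) using Nat.strong_induction_on generalizing α with
  | _ n ih =>
  intro hα
  have hn0 : n ≠ 0 := fun h0 => hα <| Finsupp.ext fun i => by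
    by_contra hi
    rw [h0, Finsupp.sum, Finset.sum_eq_zero_iff] at hn
    exact hi (hn i (Finsupp.mem_support_iff.2 hi))
  rcases Nat.lt_or_ge 1 n with h1 | h1
  swap
  · obtain rfl : n = 1 := by omega
    obtain ⟨i, rfl⟩ := (Finsupp.sum_eq_one_iff α).1 hn
    simp
  have hmem : ∀ β ∈ Finset.Ioo 0 α, 0 < (β.sum fun _ n => n) ∧ (β.sum fun _ n => n) < n ∧
      ((α - β).sum fun _ n => n) = n - (β.sum fun _ n => n) ∧ α - β ≠ 0 := by
    intro β hβ
    obtain ⟨hb0, hbα⟩ := Finset.mem_Ioo.1 hβ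
    have hs : (α - β).degree + β.degree = α.degree := by
      rw [← map_add, tsub_add_cancel_of_le hbα.le]
    have hd : ∀ γ : ℕ →₀ ℕ, (γ.sum fun _ n => n) = γ.degree := fun γ => rfl
    have hne : α - β ≠ 0 := fun h => hbα.not_ge (tsub_eq_zero_iff_le.1 h)
    have h2 := mt (Finsupp.degree_eq_zero_iff (α - β)).1 hne
    have h3 := mt (Finsupp.degree_eq_zero_iff β).1 hb0.ne'
    rw [hd] at hn
    simp only [hd]
    exact ⟨by omega, by omega, by omega, hne⟩
  set c : ℝ := (∏ i ∈ α.support, A (single i 1) ^ α i) /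
    (α.prod fun _ n => (n.factorial : ℝ)) with hc
  have hterm : ∀ β ∈ Finset.Ioo 0 α, A β * A (α - β) =
      (catalan ((β.sum fun _ n => n) - 1) * catalan (n - (β.sum fun _ n => n) - 1) *
        ((β.sum fun _ n => n).factorial * (n - (β.sum fun _ n => n)).factorial) * c) *
        (∏ i ∈ α.support, (α i).choose (β i) : ℕ) := by
    intro β hβ
    obtain ⟨hk0, hkn, hk, hne⟩ := hmem β hβ
    obtain ⟨hb0, hbα⟩ := Finset.mem_Ioo.1 hβ
    have hfact : ∀ γ ≤ α, (γ.prod fun _ n => (n.factorial : ℝ)) =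
        ∏ i ∈ α.support, ((γ i).factorial : ℝ) := fun γ hγ =>
      Finsupp.prod_of_support_subset _ (Finsupp.support_mono hγ) _ (by simp)
    have hpow : ∀ γ ≤ α, ∏ i ∈ γ.support, A (single i 1) ^ γ i =
        ∏ i ∈ α.support, A (single i 1) ^ γ i := fun γ hγ =>
      Finsupp.prod_of_support_subset γ (Finsupp.support_mono hγ)
        (fun i n => A (single i 1) ^ n) (by simp)
    rw [ih _ hkn β rfl hb0.ne', ih _ (by omega) (α - β) hk hne, hc,
      hfact β hbα.le, hfact (α - β) tsub_le_self, hfact α le_rfl,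
      hpow β hbα.le, hpow (α - β) tsub_le_self]
    have hA : ∏ i ∈ α.support, A (single i 1) ^ α i =
        (∏ i ∈ α.support, A (single i 1) ^ β i) *
          ∏ i ∈ α.support, A (single i 1) ^ (α - β) i := by
      rw [← Finset.prod_mul_distrib]
      refine Finset.prod_congr rfl fun i _ => ?_
      rw [← pow_add, Finsupp.tsub_apply, Nat.add_sub_cancel' (hbα.le i)]
    have hF : ∏ i ∈ α.support, ((α i).factorial : ℝ) =
        (∏ i ∈ α.support, (α i).choose (β i) : ℕ) *
          (∏ i ∈ α.support, ((β i).factorial : ℝ)) *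
          ∏ i ∈ α.support, (((α - β) i).factorial : ℝ) := by
      rw [Nat.cast_prod, ← Finset.prod_mul_distrib, ← Finset.prod_mul_distrib]
      refine Finset.prod_congr rfl fun i _ => ?_
      rw [Finsupp.tsub_apply]
      exact_mod_cast (Nat.choose_mul_factorial_mul_factorial (hbα.le i)).symm
    have hC : ((∏ i ∈ α.support, (α i).choose (β i) : ℕ) : ℝ) ≠ 0 :=
      Nat.cast_ne_zero.2 <| Finset.prod_ne_zero_iff.2 fun i _ => (Nat.choose_pos (hbα.le i)).ne'
    have hpf : ∀ γ : ℕ →₀ ℕ, ∏ i ∈ α.support, ((γ i).factorial : ℝ) ≠ 0 := fun γ =>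
      Finset.prod_ne_zero_iff.2 fun i _ => Nat.cast_ne_zero.2 (Nat.factorial_ne_zero _)
    have hβf := hpf β
    have hγf := hpf (α - β)
    rw [hA, hF]
    field_simp
  have hfiber : ∀ k ∈ Finset.Ioo 0 n,
      ∑ β ∈ Finset.Ioo 0 α with (β.sum fun _ n => n) = k, A β * A (α - β) =
        ((catalan (k - 1) * catalan (n - k - 1) : ℕ) : ℝ) * (n.factorial * c) := by
    intro k hk
    obtain ⟨hk0, hkn⟩ := Finset.mem_Ioo.1 hk
    have hset : {β ∈ Finset.Ioo 0 α | (β.sum fun _ n => n) = k} =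
        {β ∈ Finset.Icc 0 α | (β.sum fun _ n => n) = k} := by
      ext β
      simp only [Finset.mem_filter, Finset.mem_Ioo, Finset.mem_Icc]
      refine and_congr_left fun hβ => ⟨fun h => ⟨h.1.le, h.2.le⟩, fun h => ⟨?_, ?_⟩⟩
      · refine lt_of_le_of_ne h.1 ?_
        rintro rfl
        simp at hβ
        omega
      · refine lt_of_le_of_ne h.2 ?_
        rintro rfl
        omega
    have hsum : ∑ β ∈ Finset.Ioo 0 α with (β.sum fun _ n => n) = k, A β * A (α - β) =
        ∑ β ∈ Finset.Ioo 0 α with (β.sum fun _ n => n) = k,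
          (catalan (k - 1) * catalan (n - k - 1) * (k.factorial * (n - k).factorial) * c : ℝ) *
            (∏ i ∈ α.support, (α i).choose (β i) : ℕ) := by
      refine Finset.sum_congr rfl fun β hβ => ?_
      obtain ⟨hmβ, rfl⟩ := Finset.mem_filter.1 hβ
      exact hterm β hmβ
    rw [hsum, ← Finset.mul_sum, hset, ← Nat.cast_sum, Finsupp.sum_prod_choose, hn,
      ← Nat.choose_mul_factorial_mul_factorial hkn.le]
    push_cast
    ring
  rw [hrec α (hn ▸ h1), ← Finset.sum_fiberwise_of_maps_to
    (fun β hβ => Finset.mem_Ioo.2 ⟨(hmem β hβ).1, (hmem β hβ).2.1⟩),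
    Finset.sum_congr rfl hfiber, ← Finset.sum_mul, ← Nat.cast_sum,
    sum_Ioo_catalan_mul_catalan h1, hc]
  ring
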